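/- arXiv:2301.12047 — 2 statements merged into one kernel-verified Lean document; each statement's English description precedes it below -/
import Mathlib

section
/- Let x* : ℝᵖ → ℝⁿ and U : ℝⁿ × ℝᵖ → ℝⁿ. Fix c ∈ ℝᵖ, assume x* is differentiable at c, U is differentiable at (x*(c), c), and x*(c') = U(x*(c'), c') for all c' in an open neighborhood of c. Let Φ be the partial derivative of U with respect to its first argument at (x*(c), c) and Ψ the partial derivative with respect to its second argument at (x*(c), c), and assume the spectral radius of Φ satisfies ρ(Φ) < 1. Define the sequence of linear maps J₀ = Ψ and J_{k+1} = Φ ∘ J_k + Ψ. Then J_k converges as k → ∞ to the true Jacobian Dx*(c) of the fixed-point mapping x* at c. -/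
/-!
Differentiating `xstar c' = U (xstar c', c')` at `c` by the chain rule gives
`Dxstar = Φ ∘ Dxstar + Ψ`, so `Dxstar` is a fixed point of the affine recursion for `J`, and
`J k - Dxstar = -Φ ^ (k + 1) ∘ Dxstar`. By Gelfand's formula, `ρ(Φ) < 1` forces `Φ ^ k → 0`
(`tendsto_pow_zero_of_spectralRadius_lt_one`, `tendsto_clm_pow_zero`), and the error vanishes.
-/

/-- In a complex Banach algebra, the powers of an element of spectral radius less than one tend to
zero: for `ρ(a) < r < 1`, Gelfand's formula gives `‖a ^ k‖ ≤ r ^ k` for large `k`. -/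
lemma tendsto_pow_zero_of_spectralRadius_lt_one {A : Type*} [NormedRing A] [NormedAlgebra ℂ A]
    [CompleteSpace A] {a : A} (ha : spectralRadius ℂ a < 1) :
    Filter.Tendsto (fun k : ℕ => a ^ k) Filter.atTop (nhds 0) := by
  obtain ⟨r, har, hr⟩ := ENNReal.lt_iff_exists_nnreal_btwn.1 ha
  have hr1 : (r : ℝ) < 1 := by exact_mod_cast hr
  have hev := (spectrum.pow_nnnorm_pow_one_div_tendsto_nhds_spectralRadius a).eventually_lt_const har
  refine squeeze_zero_norm' ?_ (tendsto_pow_atTop_nhds_zero_of_lt_one r.coe_nonneg hr1)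
  filter_upwards [hev, Filter.eventually_gt_atTop 0] with k hk hk0
  have hk' : (0 : ℝ) < k := by exact_mod_cast hk0
  have h1 : ((‖a ^ k‖₊ : ENNReal)) < (r : ENNReal) ^ (k : ℝ) := by
    rwa [one_div, ENNReal.rpow_inv_lt_iff hk'] at hk
  rw [ENNReal.rpow_natCast] at h1
  exact_mod_cast h1.le

attribute [local instance] Matrix.linftyOpNormedRing Matrix.linftyOpNormedAlgebra in
/-- The powers of a real operator whose complexified matrix has spectral radius less than one tend
to zero. The `ℓ∞` operator norm of a real matrix is the operator norm on `Fin n → ℝ`, and it does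
not change under complexification. -/
lemma tendsto_clm_pow_zero {n : ℕ} (Φ : (Fin n → ℝ) →L[ℝ] (Fin n → ℝ))
    (hρ : spectralRadius ℂ ((LinearMap.toMatrix' Φ.toLinearMap).map Complex.ofReal) < 1) :
    Filter.Tendsto (fun k : ℕ => Φ ^ k) Filter.atTop (nhds 0) := by
  have h := tendsto_pow_zero_of_spectralRadius_lt_one hρ
  rw [tendsto_zero_iff_norm_tendsto_zero] at h ⊢
  refine h.congr fun k => ?_
  have hmap : (LinearMap.toMatrix' Φ.toLinearMap).map Complex.ofReal ^ k =
      (LinearMap.toMatrix' (Φ ^ k).toLinearMap).map Complex.ofReal := by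
    have hpow : LinearMap.toMatrix' (Φ ^ k).toLinearMap =
        LinearMap.toMatrix' Φ.toLinearMap ^ k := by
      rw [ContinuousLinearMap.toLinearMap_pow]
      exact map_pow LinearMap.toMatrixAlgEquiv' _ k
    rw [hpow]
    exact (map_pow Complex.ofRealHom.mapMatrix _ k).symm
  rw [hmap, ← Matrix.linfty_opNorm_toMatrix (Φ ^ k)]
  simp [Matrix.linfty_opNorm_def]


/-- **The unfolded backward pass converges to the true Jacobian of the fixed-point mapping.**
Under the differentiability and fixed-point hypotheses, with `Φ` and `Ψ` the partial
derivatives of `U` at `(x⋆ c, c)` and `ρ(Φ) < 1` (spectral radius of the complexified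
matrix of `Φ`), the recursion `J 0 = Ψ`, `J (k+1) = Φ ∘ J k + Ψ` converges (in operator
norm) to the true Jacobian `Dx⋆(c)` of `x⋆` at `c`. -/
theorem unfolding_backward_pass_tendsto_jacobian
    (n p : ℕ)
    (xstar : (Fin p → ℝ) → (Fin n → ℝ))
    (U : (Fin n → ℝ) × (Fin p → ℝ) → (Fin n → ℝ))
    (c : Fin p → ℝ)
    (Dxstar : (Fin p → ℝ) →L[ℝ] (Fin n → ℝ))
    (hx : HasFDerivAt xstar Dxstar c)
    (DU : ((Fin n → ℝ) × (Fin p → ℝ)) →L[ℝ] (Fin n → ℝ))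
    (hU : HasFDerivAt U DU (xstar c, c))
    (hfix : ∀ᶠ c' in nhds c, xstar c' = U (xstar c', c'))
    (Φ : (Fin n → ℝ) →L[ℝ] (Fin n → ℝ))
    (hΦ : Φ = DU.comp (ContinuousLinearMap.inl ℝ (Fin n → ℝ) (Fin p → ℝ)))
    (Ψ : (Fin p → ℝ) →L[ℝ] (Fin n → ℝ))
    (hΨ : Ψ = DU.comp (ContinuousLinearMap.inr ℝ (Fin n → ℝ) (Fin p → ℝ)))
    (hρ : spectralRadius ℂ ((LinearMap.toMatrix' Φ.toLinearMap).map Complex.ofReal) < 1)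
    (J : ℕ → (Fin p → ℝ) →L[ℝ] (Fin n → ℝ))
    (hJ0 : J 0 = Ψ)
    (hJrec : ∀ k, J (k + 1) = Φ.comp (J k) + Ψ) :
    Filter.Tendsto J Filter.atTop (nhds Dxstar) := by
  have hchain : HasFDerivAt (fun c' => U (xstar c', c'))
      (DU.comp (Dxstar.prod (ContinuousLinearMap.id ℝ (Fin p → ℝ)))) c :=
    HasFDerivAt.comp (f := fun c' => (xstar c', c')) c hU (hx.prodMk (hasFDerivAt_id c))
  have hD : Dxstar = Φ.comp Dxstar + Ψ := by
    refine hx.unique (((hchain.congr_of_eventuallyEq hfix)).congr_fderiv ?_)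
    ext1 v
    simp [hΦ, hΨ, ← map_add]
  have herr : ∀ k, J k = Dxstar - (Φ ^ (k + 1)).comp Dxstar := by
    intro k
    induction k with
    | zero =>
      rw [hJ0, zero_add, pow_one]
      exact eq_sub_of_add_eq' hD.symm
    | succ k ih =>
      rw [hJrec, ih, ContinuousLinearMap.comp_sub, ← ContinuousLinearMap.comp_assoc,
        pow_succ' Φ (k + 1), ContinuousLinearMap.mul_def]
      nth_rewrite 3 [hD]
      abel
  have hpow := (tendsto_clm_pow_zero Φ hρ).comp (Filter.tendsto_add_atTop_nat 1)
  have hcomp : Filter.Tendsto (fun k => (Φ ^ (k + 1)).comp Dxstar) Filter.atTop (nhds 0) := by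
    have hcont := ((ContinuousLinearMap.compL ℝ (Fin p → ℝ) (Fin n → ℝ) (Fin n → ℝ)).flip
      Dxstar).continuous.tendsto' 0 0 (map_zero _)
    exact hcont.comp hpow
  simpa [funext herr] using hcomp.const_sub Dxstar
end

section
/- Let Φ be an n×n real matrix with spectral radius ρ(Φ) < 1, let Ψ be an n×p real matrix, and let (Φ_k) and (Ψ_k) be sequences of n×n and n×p real matrices with Φ_k → Φ and Ψ_k → Ψ as k → ∞. Define J₀ to be an arbitrary n×p matrix and J_{k+1} = Φ_k J_k + Ψ_k. Then J_k converges as k → ∞ to J = (I − Φ)^{−1} Ψ. -/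
/-!
By Gelfand's formula `ρ(Φ) < 1` yields some `N ≥ 1` with `‖Φ ^ N‖ < 1` for the `ℓ^∞` operator norm.
This makes `1 - Φ` invertible, because it divides `1 - Φ ^ N`; hence `J⋆ = (1 - Φ)⁻¹ * Ψ` solves
`J⋆ = Φ * J⋆ + Ψ`. The error `E k = J k - J⋆` then obeys `E (k+1) = Φₖ * E k + r k` with `r k → 0`.
Composing `N` such steps gives `E (k+N) = A k * E k + s k` with `A k → Φ ^ N` and `s k → 0`, so that
eventually `‖E (k+N)‖ ≤ q * ‖E k‖ + ‖s k‖` for a fixed `q < 1`, which forces `E k → 0`.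
-/

section

open Filter Topology

attribute [local instance] Matrix.linftyOpNormedAddCommGroup Matrix.linftyOpNormedRing
  Matrix.linftyOpNormedAlgebra

/-- A nonnegative sequence which contracts by a factor `q < 1` every `N` steps, up to an error
tending to zero, tends to zero. -/
lemma tendsto_zero_of_le_mul_add {N : ℕ} (hN : 0 < N) {q : ℝ} (hq0 : 0 ≤ q) (hq : q < 1)
    {e δ : ℕ → ℝ} (he : ∀ k, 0 ≤ e k) (hδ : Tendsto δ atTop (𝓝 0))
    (h : ∀ᶠ k in atTop, e (k + N) ≤ q * e k + δ k) : Tendsto e atTop (𝓝 0) := by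
  rw [Metric.tendsto_atTop']
  intro ε hε
  have hδ' : ∀ᶠ k in atTop, δ k < (1 - q) * (ε / 2) :=
    hδ.eventually_lt_const (mul_pos (by linarith) (by linarith))
  obtain ⟨K, hK⟩ := eventually_atTop.1 (h.and hδ')
  set M := ∑ i ∈ Finset.range N, e (K + i) with hM
  -- Along each residue class modulo `N`, the excess of `e` over `ε / 2` decays geometrically.
  have key : ∀ j i, i < N → e (K + i + N * j) ≤ ε / 2 + q ^ j * M := by
    intro j i hi
    induction j with
    | zero =>
      have := Finset.single_le_sum (f := fun i => e (K + i)) (fun i _ => he _)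
        (Finset.mem_range.2 hi)
      simp only [mul_zero, add_zero, pow_zero, one_mul]
      linarith
    | succ j ih =>
      obtain ⟨h1, h2⟩ := hK (K + i + N * j) (by rw [add_assoc]; exact Nat.le_add_right _ _)
      have h3 := mul_le_mul_of_nonneg_left ih hq0
      rw [show K + i + N * (j + 1) = K + i + N * j + N by ring, pow_succ]
      nlinarith
  have hlim : Tendsto (fun k => q ^ ((k - K) / N) * M) atTop (𝓝 0) := by
    have h1 := (tendsto_pow_atTop_nhds_zero_of_lt_one hq0 hq).comp
      ((Nat.tendsto_div_const_atTop hN.ne').comp (tendsto_sub_atTop_nat K))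
    simpa using h1.mul_const M
  obtain ⟨L, hL⟩ := eventually_atTop.1
    ((hlim.eventually_lt_const (half_pos hε)).and (eventually_ge_atTop K))
  refine ⟨L, fun k hk => ?_⟩
  obtain ⟨h1, h2⟩ := hL k hk.le
  have h3 := key ((k - K) / N) ((k - K) % N) (Nat.mod_lt _ hN)
  rw [add_assoc, Nat.mod_add_div, Nat.add_sub_cancel' h2] at h3
  rw [Real.dist_eq, sub_zero, abs_of_nonneg (he k)]
  linarith

lemma linftyOpNorm_map_ofReal {n : ℕ} (A : Matrix (Fin n) (Fin n) ℝ) :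
    ‖A.map Complex.ofReal‖₊ = ‖A‖₊ := by
  simp [Matrix.linfty_opNNNorm_def]

/-- A consequence of Gelfand's formula, transferred from the complexification back to `ℝ`. -/
lemma exists_norm_pow_lt_one {n : ℕ} {Φ : Matrix (Fin n) (Fin n) ℝ}
    (hρ : spectralRadius ℂ (Φ.map Complex.ofReal) < 1) : ∃ N, 0 < N ∧ ‖Φ ^ N‖ < 1 := by
  have h := spectrum.pow_nnnorm_pow_one_div_tendsto_nhds_spectralRadius (Φ.map Complex.ofReal)
  obtain ⟨N, h1, hN⟩ := ((h.eventually_lt_const hρ).and (eventually_gt_atTop 0)).exists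
  refine ⟨N, hN, ?_⟩
  have hmap : Φ.map Complex.ofReal ^ N = (Φ ^ N).map Complex.ofReal :=
    (map_pow Complex.ofRealHom.mapMatrix Φ N).symm
  rw [hmap, linftyOpNorm_map_ofReal] at h1
  by_contra! hge
  have hge' : (1 : ENNReal) ≤ ‖Φ ^ N‖₊ := by exact_mod_cast hge
  exact absurd (ENNReal.one_le_rpow hge' (by positivity)) h1.not_ge

/-- Composing `m` steps of an affine recursion with vanishing inhomogeneity gives an affine
recursion of the same kind, whose linear part tends to `Φ ^ m`. -/
lemma exists_iterate_affine {n p : ℕ} {Φ : Matrix (Fin n) (Fin n) ℝ}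
    {Φseq : ℕ → Matrix (Fin n) (Fin n) ℝ} {r E : ℕ → Matrix (Fin n) (Fin p) ℝ}
    (hΦ : Tendsto Φseq atTop (𝓝 Φ)) (hr : Tendsto r atTop (𝓝 0))
    (hE : ∀ k, E (k + 1) = Φseq k * E k + r k) (m : ℕ) :
    ∃ (A : ℕ → Matrix (Fin n) (Fin n) ℝ) (s : ℕ → Matrix (Fin n) (Fin p) ℝ),
      Tendsto A atTop (𝓝 (Φ ^ m)) ∧ Tendsto s atTop (𝓝 0) ∧
        ∀ k, E (k + m) = A k * E k + s k := by
  induction m with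
  | zero => exact ⟨fun _ => 1, fun _ => 0, by simp, by simp, by simp⟩
  | succ m ih =>
    obtain ⟨A, s, hA, hs, h⟩ := ih
    have hΦm := hΦ.comp (tendsto_add_atTop_nat m)
    have hrm := hr.comp (tendsto_add_atTop_nat m)
    have cont : Continuous fun x : Matrix (Fin n) (Fin n) ℝ × Matrix (Fin n) (Fin p) ℝ =>
        x.1 * x.2 := continuous_fst.matrix_mul continuous_snd
    refine ⟨fun k => Φseq (k + m) * A k, fun k => Φseq (k + m) * s k + r (k + m), ?_, ?_, ?_⟩
    · rw [pow_succ']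
      exact hΦm.mul hA
    · simpa using ((cont.tendsto (Φ, 0)).comp (hΦm.prodMk_nhds hs)).add hrm
    · intro k
      rw [← add_assoc, hE, h, Matrix.mul_add, Matrix.mul_assoc, add_assoc]

/-- **Backward-pass convergence with varying Jacobians (unfolding from an arbitrary
starting point).** If `Φₖ → Φ` with `ρ(Φ) < 1`, `Ψₖ → Ψ`, and
`J (k+1) = Φₖ * J k + Ψₖ` with arbitrary `J 0`, then `J k → (I - Φ)⁻¹ * Ψ`. -/
theorem backprop_recursion_varying_tendsto
    (n p : ℕ) (Φ : Matrix (Fin n) (Fin n) ℝ) (Ψ : Matrix (Fin n) (Fin p) ℝ)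
    (hρ : spectralRadius ℂ (Φ.map Complex.ofReal) < 1)
    (Φseq : ℕ → Matrix (Fin n) (Fin n) ℝ)
    (Ψseq : ℕ → Matrix (Fin n) (Fin p) ℝ)
    (hΦ : Filter.Tendsto Φseq Filter.atTop (nhds Φ))
    (hΨ : Filter.Tendsto Ψseq Filter.atTop (nhds Ψ))
    (J : ℕ → Matrix (Fin n) (Fin p) ℝ)
    (hJrec : ∀ k, J (k + 1) = Φseq k * J k + Ψseq k) :
    Filter.Tendsto J Filter.atTop (nhds ((1 - Φ)⁻¹ * Ψ)) := by
  obtain ⟨N, hN, hlt⟩ := exists_norm_pow_lt_one hρ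
  have hunit : IsUnit (1 - Φ).det := by
    have h1 : IsUnit (1 - Φ ^ N).det :=
      (Matrix.isUnit_iff_isUnit_det _).1 (isUnit_one_sub_of_norm_lt_one hlt)
    rw [← mul_neg_geom_sum, Matrix.det_mul] at h1
    exact isUnit_of_mul_isUnit_left h1
  set X := (1 - Φ)⁻¹ * Ψ with hX
  have hfix : Φ * X + Ψ - X = 0 := by
    have h1 : (1 - Φ) * X = Ψ := Matrix.mul_nonsing_inv_cancel_left _ _ hunit
    rw [← h1, Matrix.sub_mul, Matrix.one_mul]
    abel
  have cont : Continuous fun A : Matrix (Fin n) (Fin n) ℝ => A * X :=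
    continuous_id.matrix_mul continuous_const
  have hr : Tendsto (fun k => Φseq k * X + Ψseq k - X) atTop (𝓝 0) := by
    rw [← hfix]
    exact (((cont.tendsto Φ).comp hΦ).add hΨ).sub_const X
  have hE : ∀ k, J (k + 1) - X = Φseq k * (J k - X) + (Φseq k * X + Ψseq k - X) := by
    intro k
    rw [hJrec, Matrix.mul_sub]
    abel
  obtain ⟨A, s, hA, hs, h⟩ := exists_iterate_affine (E := fun k => J k - X) hΦ hr hE N
  obtain ⟨q, hq1, hq2⟩ := exists_between hlt
  have hnorm : Tendsto (fun k => ‖J k - X‖) atTop (𝓝 0) := by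
    refine tendsto_zero_of_le_mul_add hN ((norm_nonneg _).trans hq1.le) hq2
      (fun k => norm_nonneg _) (tendsto_zero_iff_norm_tendsto_zero.1 hs) ?_
    filter_upwards [hA.norm.eventually_lt_const hq1] with k hk
    calc ‖J (k + N) - X‖ = ‖A k * (J k - X) + s k‖ := by rw [← h k]
      _ ≤ ‖A k * (J k - X)‖ + ‖s k‖ := norm_add_le _ _
      _ ≤ ‖A k‖ * ‖J k - X‖ + ‖s k‖ := by gcongr; exact Matrix.linfty_opNorm_mul _ _
      _ ≤ q * ‖J k - X‖ + ‖s k‖ := by gcongr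
  exact tendsto_iff_norm_sub_tendsto_zero.2 hnorm

end
end
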